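/- Let (X, μ) be a measure space with 0 < μ(X) < ∞, let l be a positive integer, and let F be a finite-dimensional real subspace of the space of functions from X to ℝ^l whose members are all measurable and bounded. Suppose C ≥ 0 is a constant such that every s ∈ F satisfies μ(X) · (sup_{x ∈ X} ‖s(x)‖)² ≤ C · ∫_X ‖s(x)‖² dμ(x). Then dim_ℝ F ≤ l · C. -/

import Mathlib

open MeasureTheory

/-!
Let `b` be an `L²`-orthonormal basis of `F`. Integrating `∑ i, ‖b i x‖²` over `X` gives `dim F`.
Pointwise, this sum is the squared Hilbert–Schmidt norm of the evaluation map `s ↦ s x`, whose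
operator norm the hypothesis controls; passing to the adjoint, the Hilbert–Schmidt norm is a sum
over an orthonormal basis of the target, so it exceeds the operator norm by at most the factor
`dim E`, however large `F` is. Since the bound does not depend on `F`, applying it to the
finite-dimensional subspaces of a space shows that the space is itself finite-dimensional.
-/

open Module

lemma finiteDimensional_of_forall_finrank_le {K V : Type*} [DivisionRing K] [AddCommGroup V]
    [Module K V] {F : Submodule K V} {n : ℕ}
    (h : ∀ G ≤ F, FiniteDimensional K G → finrank K G ≤ n) : FiniteDimensional K F := by
  suffices rank_le_n : Module.rank K F ≤ n from
    rank_lt_aleph0_iff.1 (rank_le_n.trans_lt Cardinal.natCast_lt_aleph0)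
  refine rank_le fun t ht ↦ ?_
  let v : t → V := fun i ↦ ((i : F) : V)
  have span_le : Submodule.span K (Set.range v) ≤ F :=
    Submodule.span_le.2 (Set.range_subset_iff.2 fun i ↦ i.1.2)
  have linearIndependent : LinearIndependent K v := ht.map' F.subtype F.ker_subtype
  calc
    t.card = finrank K (Submodule.span K (Set.range v)) := by
      rw [finrank_span_eq_card linearIndependent, Fintype.card_coe]
    _ ≤ n := h _ span_le (FiniteDimensional.span_of_finite K (Set.finite_range v))

lemma opNorm_sq_le_of_forall_norm_sq_le {𝕜 H E : Type*} [NontriviallyNormedField 𝕜]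
    [SeminormedAddCommGroup H] [NormedSpace 𝕜 H] [SeminormedAddCommGroup E] [NormedSpace 𝕜 E]
    {T : H →L[𝕜] E} {a : ℝ} (ha : 0 ≤ a) (hT : ∀ v, ‖T v‖ ^ 2 ≤ a * ‖v‖ ^ 2) :
    ‖T‖ ^ 2 ≤ a := by
  have opNorm_le_sqrt : ‖T‖ ≤ √a := T.opNorm_le_bound (Real.sqrt_nonneg a) fun v ↦ by
    rw [← sq_le_sq₀ (norm_nonneg _) (by positivity), mul_pow, Real.sq_sqrt ha]
    exact hT v
  exact (Real.le_sqrt (norm_nonneg T) ha).1 opNorm_le_sqrt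

lemma norm_sq_le_div_of_mul_iSup_norm_sq_le {X E : Type*} [SeminormedAddCommGroup E] {f : X → E}
    (hf : BddAbove (Set.range fun x ↦ ‖f x‖)) {V a : ℝ} (hV : 0 < V)
    (h : V * (⨆ x, ‖f x‖) ^ 2 ≤ a) (x : X) : ‖f x‖ ^ 2 ≤ a / V := by
  have norm_le_iSup : ‖f x‖ ≤ ⨆ y, ‖f y‖ := le_ciSup hf x
  rw [le_div_iff₀' hV]
  exact le_trans (by gcongr) h

section HilbertSchmidt

variable {𝕜 H E ι κ : Type*} [RCLike 𝕜] [NormedAddCommGroup H] [InnerProductSpace 𝕜 H]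
  [NormedAddCommGroup E] [InnerProductSpace 𝕜 E] [Fintype ι] [Fintype κ]

lemma sum_norm_sq_apply_eq_sum_norm_sq_adjoint_apply [CompleteSpace H] [CompleteSpace E]
    (T : H →L[𝕜] E) (b : OrthonormalBasis ι 𝕜 H) (e : OrthonormalBasis κ 𝕜 E) :
    ∑ i, ‖T (b i)‖ ^ 2 = ∑ j, ‖T.adjoint (e j)‖ ^ 2 := by
  simp_rw [← e.sum_sq_norm_inner_left, ← b.sum_sq_norm_inner_right,
    ContinuousLinearMap.adjoint_inner_right]
  exact Finset.sum_comm

lemma sum_norm_sq_apply_le_finrank_mul_opNorm_sq [FiniteDimensional 𝕜 E] (T : H →L[𝕜] E)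
    (b : OrthonormalBasis ι 𝕜 H) :
    ∑ i, ‖T (b i)‖ ^ 2 ≤ finrank 𝕜 E * ‖T‖ ^ 2 := by
  have : FiniteDimensional 𝕜 H := b.toBasis.finiteDimensional_of_finite
  have := FiniteDimensional.complete 𝕜 H
  have := FiniteDimensional.complete 𝕜 E
  let e := stdOrthonormalBasis 𝕜 E
  have adjoint_le (j) : ‖T.adjoint (e j)‖ ≤ ‖T‖ := by
    simpa using T.adjoint.le_opNorm (e j)
  calc
    ∑ i, ‖T (b i)‖ ^ 2 = ∑ j, ‖T.adjoint (e j)‖ ^ 2 :=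
      sum_norm_sq_apply_eq_sum_norm_sq_adjoint_apply T b e
    _ ≤ ∑ _j : Fin (finrank 𝕜 E), ‖T‖ ^ 2 := by gcongr with j; exact adjoint_le j
    _ = finrank 𝕜 E * ‖T‖ ^ 2 := by simp

end HilbertSchmidt

section ParsevalFrame

variable {𝕜 X H E : Type*} [RCLike 𝕜] [MeasurableSpace X] {μ : Measure X}
  [NormedAddCommGroup H] [InnerProductSpace 𝕜 H] [FiniteDimensional 𝕜 H]
  [NormedAddCommGroup E] [InnerProductSpace 𝕜 E] [FiniteDimensional 𝕜 E] {A : X → ℝ}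

lemma finrank_le_finrank_mul_integral_of_opNorm_sq_le {T : X → H →L[𝕜] E}
    (hT : ∀ v, ∫ x, ‖T x v‖ ^ 2 ∂μ = ‖v‖ ^ 2) (hA : Integrable A μ)
    (hTA : ∀ᵐ x ∂μ, ‖T x‖ ^ 2 ≤ A x) :
    (finrank 𝕜 H : ℝ) ≤ finrank 𝕜 E * ∫ x, A x ∂μ := by
  let b := stdOrthonormalBasis 𝕜 H
  have integral_eq_one (i) : ∫ x, ‖T x (b i)‖ ^ 2 ∂μ = 1 := by simp [hT]
  have integrable (i) : Integrable (fun x ↦ ‖T x (b i)‖ ^ 2) μ :=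
    integrable_of_integral_eq_one (integral_eq_one i)
  calc
    (finrank 𝕜 H : ℝ) = ∑ i, ∫ x, ‖T x (b i)‖ ^ 2 ∂μ := by simp [integral_eq_one]
    _ = ∫ x, ∑ i, ‖T x (b i)‖ ^ 2 ∂μ := (integral_finsetSum _ fun i _ ↦ integrable i).symm
    _ ≤ ∫ x, finrank 𝕜 E * A x ∂μ := by
      refine integral_mono_ae (integrable_finsetSum _ fun i _ ↦ integrable i)
        (hA.const_mul _) ?_
      filter_upwards [hTA] with x hx
      exact (sum_norm_sq_apply_le_finrank_mul_opNorm_sq (T x) b).trans (by gcongr)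
    _ = finrank 𝕜 E * ∫ x, A x ∂μ := integral_const_mul _ _

end ParsevalFrame

section ToLp

lemma norm_toLp_two_sq {X E : Type*} [MeasurableSpace X] {μ : Measure X} [NormedAddCommGroup E]
    {f : X → E} (hf : MemLp f 2 μ) : ‖hf.toLp f‖ ^ 2 = ∫ x, ‖f x‖ ^ 2 ∂μ := by
  have integral_sq_nonneg : 0 ≤ ∫ x, ‖f x‖ ^ 2 ∂μ := integral_nonneg fun x ↦ sq_nonneg _
  rw [Lp.norm_toLp, hf.eLpNorm_eq_integral_rpow_norm two_ne_zero ENNReal.ofNat_ne_top,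
    ENNReal.toReal_ofReal (by positivity)]
  simpa using Real.rpow_inv_natCast_pow integral_sq_nonneg two_ne_zero

variable {𝕜 X E : Type*} [NormedRing 𝕜] [MeasurableSpace X] {μ : Measure X}
  [NormedAddCommGroup E] [Module 𝕜 E] [IsBoundedSMul 𝕜 E]

/-- The linear map sending a function in `F` to its class in `Lᵖ`. It need not be injective, since
the elements of `F` are actual functions rather than classes modulo null sets. -/
noncomputable def submoduleToLp {p : ENNReal} (F : Submodule 𝕜 (X → E))
    (hF : ∀ s ∈ F, MemLp s p μ) : F →ₗ[𝕜] Lp E p μ where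
  toFun s := (hF s s.2).toLp s
  map_add' s t := MemLp.toLp_add (hF s s.2) (hF t t.2)
  map_smul' c s := MemLp.toLp_const_smul c (hF s s.2)

variable {F : Submodule 𝕜 (X → E)} {A : X → ℝ}

lemma norm_submoduleToLp_sq (hF : ∀ s ∈ F, MemLp s 2 μ) (s : F) :
    ‖submoduleToLp F hF s‖ ^ 2 = ∫ x, ‖(s : X → E) x‖ ^ 2 ∂μ :=
  norm_toLp_two_sq (hF s s.2)

lemma submoduleToLp_injective (hF : ∀ s ∈ F, MemLp s 2 μ)
    (hFA : ∀ s ∈ F, ∀ x, ‖s x‖ ^ 2 ≤ A x * ∫ y, ‖s y‖ ^ 2 ∂μ) :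
    Function.Injective (submoduleToLp F hF) := by
  refine (injective_iff_map_eq_zero _).2 fun s hs ↦ Subtype.ext <| funext fun x ↦ ?_
  have integral_eq_zero : ∫ y, ‖(s : X → E) y‖ ^ 2 ∂μ = 0 := by
    simp [← norm_submoduleToLp_sq hF, hs]
  simpa [integral_eq_zero] using hFA s s.2 x

end ToLp

section Bound

variable {𝕜 X E : Type*} [RCLike 𝕜] [MeasurableSpace X] {μ : Measure X}
  [NormedAddCommGroup E] [InnerProductSpace 𝕜 E] [FiniteDimensional 𝕜 E]
  {F : Submodule 𝕜 (X → E)} {A : X → ℝ}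

lemma finrank_le_finrank_mul_integral_of_norm_sq_le [FiniteDimensional 𝕜 F]
    (hF : ∀ s ∈ F, MemLp s 2 μ) (hA : Integrable A μ) (hA₀ : 0 ≤ᵐ[μ] A)
    (hFA : ∀ s ∈ F, ∀ x, ‖s x‖ ^ 2 ≤ A x * ∫ y, ‖s y‖ ^ 2 ∂μ) :
    (finrank 𝕜 F : ℝ) ≤ finrank 𝕜 E * ∫ x, A x ∂μ := by
  let H := (submoduleToLp F hF).range
  let φ : F ≃ₗ[𝕜] H := LinearEquiv.ofInjective _ (submoduleToLp_injective hF hFA)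
  let eval (x : X) : H →L[𝕜] E :=
    (LinearMap.proj x ∘ₗ F.subtype ∘ₗ φ.symm.toLinearMap).toContinuousLinearMap
  have integral_norm_eval_sq (v : H) : ∫ x, ‖eval x v‖ ^ 2 ∂μ = ‖v‖ ^ 2 := by
    obtain ⟨s, rfl⟩ := φ.surjective v
    have eval_apply (x : X) : eval x (φ s) = (s : X → E) x := by simp [eval]
    simp_rw [eval_apply]
    exact (norm_submoduleToLp_sq hF s).symm
  have opNorm_eval_sq_le : ∀ᵐ x ∂μ, ‖eval x‖ ^ 2 ≤ A x := by
    filter_upwards [hA₀] with x hx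
    refine opNorm_sq_le_of_forall_norm_sq_le hx fun v ↦ ?_
    rw [← integral_norm_eval_sq v]
    exact hFA _ (φ.symm v).2 x
  rw [φ.finrank_eq]
  exact finrank_le_finrank_mul_integral_of_opNorm_sq_le integral_norm_eval_sq hA opNorm_eval_sq_le

theorem finrank_le_of_sup_sq_le_integral_sq_general
    (hF : ∀ s ∈ F, MemLp s 2 μ) (hA : Integrable A μ) (hA₀ : 0 ≤ᵐ[μ] A)
    (hFA : ∀ s ∈ F, ∀ x, ‖s x‖ ^ 2 ≤ A x * ∫ y, ‖s y‖ ^ 2 ∂μ) :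
    FiniteDimensional 𝕜 F ∧ (finrank 𝕜 F : ℝ) ≤ finrank 𝕜 E * ∫ x, A x ∂μ := by
  have finrank_le (G : Submodule 𝕜 (X → E)) (hGF : G ≤ F) (_ : FiniteDimensional 𝕜 G) :
      (finrank 𝕜 G : ℝ) ≤ finrank 𝕜 E * ∫ x, A x ∂μ :=
    finrank_le_finrank_mul_integral_of_norm_sq_le (fun s hs ↦ hF s (hGF hs)) hA hA₀
      fun s hs ↦ hFA s (hGF hs)
  have finiteDimensional : FiniteDimensional 𝕜 F :=
    finiteDimensional_of_forall_finrank_le fun G hGF hG ↦ Nat.le_floor (finrank_le G hGF hG)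
  exact ⟨finiteDimensional, finrank_le F le_rfl finiteDimensional⟩

end Bound

/-- Measure-theoretic content of Lemma 2.4 (Li's lemma, following Bérard): if `F` is a
finite-dimensional space of bounded measurable `ℝ^l`-valued functions on a finite measure
space of positive total mass, and every `s ∈ F` satisfies
`μ(X) · (sup_x ‖s(x)‖)² ≤ C · ∫ ‖s‖² dμ`, then `dim F ≤ l · C`. -/
theorem finrank_le_of_sup_sq_le_integral_sq
    (X : Type*) [MeasurableSpace X] (μ : Measure X)
    (hpos : 0 < μ Set.univ) (hfin : μ Set.univ < ⊤)
    (l : ℕ) (hl : 0 < l)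
    (F : Subspace ℝ (X → EuclideanSpace ℝ (Fin l)))
    [FiniteDimensional ℝ F]
    (hmeas : ∀ s ∈ F, Measurable s)
    (hbdd : ∀ s ∈ F, ∃ M : ℝ, ∀ x : X, ‖s x‖ ≤ M)
    (C : ℝ) (hC : 0 ≤ C)
    (hineq : ∀ s ∈ F,
      (μ Set.univ).toReal * (⨆ x : X, ‖s x‖) ^ 2 ≤ C * ∫ x, ‖s x‖ ^ 2 ∂μ) :
    (Module.finrank ℝ F : ℝ) ≤ l * C := by
  have : IsFiniteMeasure μ := ⟨hfin⟩
  have measure_pos : 0 < μ.real Set.univ := ENNReal.toReal_pos hpos.ne' hfin.ne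
  have memLp (s) (hs : s ∈ F) : MemLp s 2 μ :=
    let ⟨M, hM⟩ := hbdd s hs
    .of_bound (hmeas s hs).aestronglyMeasurable M (ae_of_all μ hM)
  have norm_sq_le (s) (hs : s ∈ F) (x : X) :
      ‖s x‖ ^ 2 ≤ C / μ.real Set.univ * ∫ y, ‖s y‖ ^ 2 ∂μ := by
    obtain ⟨M, hM⟩ := hbdd s hs
    rw [div_mul_eq_mul_div]
    exact norm_sq_le_div_of_mul_iSup_norm_sq_le ⟨M, Set.forall_mem_range.2 hM⟩ measure_pos
      (hineq s hs) x
  have finrank_le := (finrank_le_of_sup_sq_le_integral_sq_general memLp (integrable_const _)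
    (ae_of_all μ fun _ ↦ by positivity) norm_sq_le).2
  simpa [mul_div_cancel₀ C measure_pos.ne'] using finrank_le
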